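/- Let X^i_α : ℝ^p × ℝ^n → ℝ be smooth and suppose D_β X^i_α ≡ 0 for all i, α, β. Then a smooth map x : ℝ^p → ℝ^n is an extremal of the Lagrangian L = (½ h^{αβ} g_{ij} x^i_α x^j_β + f) √|det h|, where f(t,x) = ½ h^{αβ}(t) g_{ij}(x) X^i_α(t,x) X^j_β(t,x) is the potential energy, if and only if it satisfies the generalized Poisson system h^{αβ} x^i_{αβ} = g^{ih} h^{αβ} g_{kj} (∇_h X^k_α) X^j_β + h^{αβ} D_β X^i_α for all i (all quantities depending on (t,x) evaluated at (t, x(t))). -/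

import Mathlib

/-!
The Levi-Civita connection makes `g` parallel: `∂_k g_{ij} = g_{il} G^l_{kj} + g_{jl} G^l_{ki}`,
and likewise for `h`. Write `v` for the first jet of `x`, `G_k` for the matrix with entries
`G^i_{kl}`, and `⟨u, w⟩ = h^{αβ} g_{ij} u^i_α w^j_β`.

* By Jacobi's formula and the derivative of the inverse matrix,
  `∂_α (√|det h| h^{αβ}) = -√|det h| h^{αγ} H^β_{αγ}`. Hence the divergence of the momentum
  `√|det h| h^{αβ} g_{kj} x^j_β` is `√|det h|` times the covariant trace of `g_{kj} x^j_β`.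
* Differentiating `g(x(t))` in that trace leaves `g_{kj} h^{αβ} x^j_{αβ} + ⟨G_k v, v⟩`.
* In `∂L/∂x^k` the kinetic part contributes `½ h^{αβ} (∂_k g_{ij}) x^i_α x^j_β = ⟨G_k v, v⟩`,
  which cancels. The same identity applied to `X` gives `∂_k f = ⟨∇_k X, X⟩`.

The Euler–Lagrange expression is therefore `√|det h| (⟨∇_k X, X⟩ - g_{kj} h^{αβ} x^j_{αβ})`. It
contains no `D_β X`, so its vanishing is the generalized Poisson system when `D_β X = 0`.
-/

open scoped BigOperators

noncomputable section

/-- Partial derivative of `f : ℝ^m → ℝ` at `t` in the `α`-th coordinate direction. -/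
def pd {m : ℕ} (α : Fin m) (f : (Fin m → ℝ) → ℝ) (t : Fin m → ℝ) : ℝ :=
  fderiv ℝ f t (Pi.single α 1)

/-- Componentwise inverse of a square array of reals (matrix inversion). -/
def minv {m : ℕ} (A : Fin m → Fin m → ℝ) : Fin m → Fin m → ℝ :=
  fun i j => (Matrix.of A)⁻¹ i j

/-- `√|det h(t)|`, the volume density of the metric `h`. -/
def sqrtDet {p : ℕ} (h : (Fin p → ℝ) → Fin p → Fin p → ℝ) (t : Fin p → ℝ) : ℝ :=
  Real.sqrt |(Matrix.of (h t)).det|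

/-- First jet `x^i_α = ∂x^i/∂t^α` of a map `x : ℝ^p → ℝ^n`. -/
def jet {p n : ℕ} (x : (Fin p → ℝ) → Fin n → ℝ) (t : Fin p → ℝ) :
    Fin n → Fin p → ℝ :=
  fun i α => pd α (fun s => x s i) t

/-- Christoffel symbols `G^i_{jk} = ½ g^{il}(∂g_{lj}/∂x^k + ∂g_{lk}/∂x^j − ∂g_{jk}/∂x^l)`. -/
def christoffel {m : ℕ} (g : (Fin m → ℝ) → Fin m → Fin m → ℝ)
    (i j k : Fin m) (q : Fin m → ℝ) : ℝ :=
  (1 / 2) * ∑ l, minv (g q) i l *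
    (pd k (fun y => g y l j) q + pd j (fun y => g y l k) q - pd l (fun y => g y j k) q)

/-- Covariant second jet
`x^i_{αβ} = ∂²x^i/∂t^α∂t^β − H^γ_{αβ} x^i_γ + G^i_{jk} x^j_α x^k_β`. -/
def covHess {p n : ℕ} (h : (Fin p → ℝ) → Fin p → Fin p → ℝ)
    (g : (Fin n → ℝ) → Fin n → Fin n → ℝ)
    (x : (Fin p → ℝ) → Fin n → ℝ) (i : Fin n) (α β : Fin p) (t : Fin p → ℝ) : ℝ :=
  pd α (fun s => jet x s i β) t
    - (∑ γ, christoffel h γ α β t * jet x t i γ)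
    + ∑ j, ∑ k, christoffel g i j k (x t) * jet x t j α * jet x t k β

/-- `∇_j X^i_α = ∂X^i_α/∂x^j + G^i_{jk} X^k_α`. -/
def nablaX {p n : ℕ} (g : (Fin n → ℝ) → Fin n → Fin n → ℝ)
    (X : Fin n → Fin p → (Fin p → ℝ) → (Fin n → ℝ) → ℝ)
    (j i : Fin n) (α : Fin p) (t : Fin p → ℝ) (q : Fin n → ℝ) : ℝ :=
  pd j (fun y => X i α t y) q + ∑ k, christoffel g i j k q * X k α t q

/-- `D_β X^i_α = ∂X^i_α/∂t^β − H^γ_{βα} X^i_γ`. -/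
def Dt {p n : ℕ} (h : (Fin p → ℝ) → Fin p → Fin p → ℝ)
    (X : Fin n → Fin p → (Fin p → ℝ) → (Fin n → ℝ) → ℝ)
    (β : Fin p) (i : Fin n) (α : Fin p) (t : Fin p → ℝ) (q : Fin n → ℝ) : ℝ :=
  pd β (fun s => X i α s q) t - ∑ γ, christoffel h γ β α t * X i γ t q

/-- External tensor `F_j{}^i{}_α = ∇_j X^i_α − g_{hj} g^{ik} ∇_k X^h_α`. -/
def Fext {p n : ℕ} (g : (Fin n → ℝ) → Fin n → Fin n → ℝ)
    (X : Fin n → Fin p → (Fin p → ℝ) → (Fin n → ℝ) → ℝ)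
    (j i : Fin n) (α : Fin p) (t : Fin p → ℝ) (q : Fin n → ℝ) : ℝ :=
  nablaX g X j i α t q
    - ∑ h', ∑ k, g q h' j * minv (g q) i k * nablaX g X k h' α t q

/-- Potential energy `f = ½ h^{αβ} g_{ij} X^i_α X^j_β`. -/
def potE {p n : ℕ} (h : (Fin p → ℝ) → Fin p → Fin p → ℝ)
    (g : (Fin n → ℝ) → Fin n → Fin n → ℝ)
    (X : Fin n → Fin p → (Fin p → ℝ) → (Fin n → ℝ) → ℝ)
    (t : Fin p → ℝ) (q : Fin n → ℝ) : ℝ :=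
  (1 / 2) * ∑ α, ∑ β, ∑ i, ∑ j, minv (h t) α β * g q i j * X i α t q * X j β t q

/-- A map `x` is an extremal of the first-order Lagrangian `L = L(t, x, x_·)` iff it
satisfies the Euler–Lagrange equations
`∂L/∂x^k − (d/dt^α)(∂L/∂x^k_α) = 0` along the first jet of `x`. -/
def IsExtremal {p n : ℕ}
    (L : (Fin p → ℝ) → (Fin n → ℝ) → (Fin n → Fin p → ℝ) → ℝ)
    (x : (Fin p → ℝ) → Fin n → ℝ) : Prop :=
  ∀ (t : Fin p → ℝ) (k : Fin n),
    fderiv ℝ (fun q => L t q (jet x t)) (x t) (Pi.single k 1)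
      - (∑ α, pd α
          (fun s => fderiv ℝ (fun v => L s (x s) v) (jet x s)
            (Pi.single k (Pi.single α 1))) t) = 0

section MatrixDerivative

open Matrix

variable {𝕜 E ι κ l : Type*} [NontriviallyNormedField 𝕜] [NormedAddCommGroup E] [NormedSpace 𝕜 E]

/-- The derivative of the matrix-valued function `A` at `y` in the direction `w`, taken entry by
entry so that no norm on matrices has to be chosen. -/
def matrixDeriv (A : E → Matrix ι κ 𝕜) (y w : E) : Matrix ι κ 𝕜 :=
  of fun i j => fderiv 𝕜 (fun z => A z i j) y w

theorem matrixDeriv_mul [Fintype κ] {A : E → Matrix ι κ 𝕜} {B : E → Matrix κ l 𝕜} {y : E}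
    (hA : ∀ i j, DifferentiableAt 𝕜 (fun z => A z i j) y)
    (hB : ∀ i j, DifferentiableAt 𝕜 (fun z => B z i j) y) (w : E) :
    matrixDeriv (fun z => A z * B z) y w
      = matrixDeriv A y w * B y + A y * matrixDeriv B y w := by
  ext i j
  simp (disch := fun_prop) [matrixDeriv, mul_apply, fderiv_fun_sum, fderiv_fun_mul,
    Finset.sum_add_distrib, mul_comm, add_comm]

variable [Fintype ι] [DecidableEq ι] {A : E → Matrix ι ι 𝕜} {y : E}

theorem differentiableAt_matrix_det (hA : ∀ i j, DifferentiableAt 𝕜 (fun z => A z i j) y) :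
    DifferentiableAt 𝕜 (fun z => (A z).det) y := by
  simp only [det_apply']
  fun_prop

/-- Jacobi's formula: differentiate `det` as a multilinear function of the rows, and expand each
resulting determinant by Cramer's rule. -/
theorem fderiv_matrix_det_apply (hA : ∀ i j, DifferentiableAt 𝕜 (fun z => A z i j) y) (w : E) :
    fderiv 𝕜 (fun z => (A z).det) y w = ((A y).adjugate * matrixDeriv A y w).trace := by
  let detRow : ContinuousMultilinearMap 𝕜 (fun _ : ι => ι → 𝕜) 𝕜 :=
    { (detRowAlternating : (ι → 𝕜) [⋀^ι]→ₗ[𝕜] 𝕜).toMultilinearMap with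
      cont := continuous_id.matrix_det }
  have hrow (i : ι) : HasFDerivAt (fun z => (A z).row i) (fderiv 𝕜 (fun z => (A z).row i) y) y :=
    (differentiableAt_pi.mpr (hA i)).hasFDerivAt
  have hderiv : HasFDerivAt (fun z => (A z).det) _ y := HasFDerivAt.multilinear_comp detRow hrow
  calc fderiv 𝕜 (fun z => (A z).det) y w
      = ∑ i, ((A y).updateRow i (fderiv 𝕜 (fun z => (A z).row i) y w)).det := by
        rw [hderiv.fderiv, _root_.sum_apply]
        rfl
    _ = ∑ i, ((A y).updateRow i ((matrixDeriv A y w).row i)).det := by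
        congr! with i
        exact congrArg (· w) (fderiv_pi (hA i))
    _ = ∑ i, ((A y)ᵀ.adjugate *ᵥ (matrixDeriv A y w).row i) i := by
        simp only [← cramer_transpose_apply, cramer_eq_adjugate_mulVec]
    _ = ((A y).adjugate * matrixDeriv A y w).trace := by
        rw [trace_mul_comm]
        simp [trace, mul_apply, row, mulVec, dotProduct, ← adjugate_transpose, mul_comm]

theorem differentiableAt_matrix_inv_apply (hA : ∀ i j, DifferentiableAt 𝕜 (fun z => A z i j) y)
    (hdet : (A y).det ≠ 0) (i j : ι) : DifferentiableAt 𝕜 (fun z => (A z)⁻¹ i j) y := by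
  have hadj : DifferentiableAt 𝕜 (fun z => (A z).adjugate i j) y := by
    simp only [adjugate_apply]
    refine differentiableAt_matrix_det fun a b => ?_
    by_cases haj : a = j <;> simp [updateRow_apply, haj, hA]
  simp only [inv_def, Matrix.smul_apply, Ring.inverse_eq_inv', smul_eq_mul]
  exact ((differentiableAt_matrix_det hA).inv hdet).mul hadj

theorem matrixDeriv_inv (hA : ∀ i j, DifferentiableAt 𝕜 (fun z => A z i j) y)
    (hdet : (A y).det ≠ 0) (w : E) :
    matrixDeriv (fun z => (A z)⁻¹) y w = -((A y)⁻¹ * matrixDeriv A y w * (A y)⁻¹) := by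
  have hunit : IsUnit (A y).det := hdet.isUnit
  have hinv : ∀ᶠ z in nhds y, (A z)⁻¹ * A z = 1 :=
    ((differentiableAt_matrix_det hA).continuousAt.eventually_ne hdet).mono fun z hz =>
      nonsing_inv_mul _ hz.isUnit
  have hconst : matrixDeriv (fun z => (A z)⁻¹ * A z) y w = 0 := by
    ext i j
    have hij : (fun z => ((A z)⁻¹ * A z) i j) =ᶠ[nhds y] fun _ => (1 : Matrix ι ι 𝕜) i j :=
      hinv.mono fun z hz => by simp only [hz]
    simp [matrixDeriv, hij.fderiv_eq]
  rw [matrixDeriv_mul (differentiableAt_matrix_inv_apply hA hdet) hA,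
    add_eq_zero_iff_eq_neg] at hconst
  rw [← mul_nonsing_inv_cancel_right (A y) (matrixDeriv (fun z => (A z)⁻¹) y w) hunit, hconst,
    neg_mul]

end MatrixDerivative

section Metric

variable {m : ℕ} {g : (Fin m → ℝ) → Fin m → Fin m → ℝ} {q : Fin m → ℝ}

theorem pd_mul {f₁ f₂ : (Fin m → ℝ) → ℝ} (h₁ : DifferentiableAt ℝ f₁ q)
    (h₂ : DifferentiableAt ℝ f₂ q) (c : Fin m) :
    pd c (fun y => f₁ y * f₂ y) q = pd c f₁ q * f₂ q + f₁ q * pd c f₂ q := by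
  simp [pd, fderiv_fun_mul h₁ h₂, mul_comm, add_comm]

theorem pd_sum {ι : Type*} [Fintype ι] {f : ι → (Fin m → ℝ) → ℝ}
    (hf : ∀ i, DifferentiableAt ℝ (f i) q) (c : Fin m) :
    pd c (fun y => ∑ i, f i y) q = ∑ i, pd c (f i) q := by
  simp [pd, fderiv_fun_sum fun i _ => hf i]

theorem minv_comm {A : Fin m → Fin m → ℝ} (hA : ∀ i j, A i j = A j i) (i j : Fin m) :
    minv A i j = minv A j i := by
  have hsymm : (Matrix.of A).IsSymm := Matrix.IsSymm.ext fun i j => hA j i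
  exact hsymm.inv.apply j i

theorem christoffel_comm (hsymm : ∀ y a b, g y a b = g y b a) (a b c : Fin m) (q : Fin m → ℝ) :
    christoffel g a b c q = christoffel g a c b q := by
  simp only [christoffel, hsymm _ b c, add_comm]

theorem sum_metric_mul_christoffel (hdet : (Matrix.of (g q)).det ≠ 0) (k a b : Fin m) :
    ∑ i, g q k i * christoffel g i a b q
      = (1 / 2) * (pd b (fun y => g y k a) q + pd a (fun y => g y k b) q
          - pd k (fun y => g y a b) q) := by
  let dg : Fin m → ℝ := fun l => (1 / 2) * (pd b (fun y => g y l a) q + pd a (fun y => g y l b) q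
    - pd l (fun y => g y a b) q)
  have hchr : (fun i => christoffel g i a b q) = (Matrix.of (g q))⁻¹.mulVec dg := by
    funext i
    simp only [christoffel, Matrix.mulVec, dotProduct, dg, minv, Finset.mul_sum]
    exact Finset.sum_congr rfl fun l _ => by ring
  have := congrFun (congrArg (Matrix.of (g q)).mulVec hchr) k
  rwa [Matrix.mulVec_mulVec, Matrix.mul_nonsing_inv _ hdet.isUnit, Matrix.one_mulVec] at this

theorem pd_metric (hsymm : ∀ y a b, g y a b = g y b a) (hdet : (Matrix.of (g q)).det ≠ 0)
    (c a b : Fin m) :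
    pd c (fun y => g y a b) q
      = ∑ l, g q a l * christoffel g l c b q + ∑ l, g q b l * christoffel g l c a q := by
  rw [sum_metric_mul_christoffel hdet, sum_metric_mul_christoffel hdet]
  simp only [hsymm _ b a, hsymm _ b c, hsymm _ a c]
  ring

/-- The connection matrix `(Γ_c)^a_b = Γ^a_{cb}` of the Levi-Civita connection of `g` in the
`c`-th coordinate direction. -/
def connectionMatrix (g : (Fin m → ℝ) → Fin m → Fin m → ℝ) (c : Fin m) (q : Fin m → ℝ) :
    Matrix (Fin m) (Fin m) ℝ :=
  .of fun a b => christoffel g a c b q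

open Matrix in
theorem matrixDeriv_metric (hsymm : ∀ y a b, g y a b = g y b a) (hdet : (of (g q)).det ≠ 0)
    (c : Fin m) :
    matrixDeriv (fun y => of (g y)) q (Pi.single c 1)
      = of (g q) * connectionMatrix g c q + (connectionMatrix g c q)ᵀ * of (g q) := by
  ext a b
  change pd c (fun y => g y a b) q = _
  rw [pd_metric hsymm hdet]
  simp [mul_apply, connectionMatrix, mul_comm, hsymm q b]

open Matrix in
theorem pd_minv (hsymm : ∀ y a b, g y a b = g y b a)
    (hg : ∀ a b, DifferentiableAt ℝ (fun y => g y a b) q) (hdet : (of (g q)).det ≠ 0)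
    (c a b : Fin m) :
    pd c (fun y => minv (g y) a b) q
      = -(∑ d, christoffel g a c d q * minv (g q) d b
          + ∑ d, minv (g q) a d * christoffel g b c d q) := by
  have hderiv : matrixDeriv (fun y => (of (g y))⁻¹) q (Pi.single c 1)
      = -(connectionMatrix g c q * (of (g q))⁻¹ + (of (g q))⁻¹ * (connectionMatrix g c q)ᵀ) := by
    rw [matrixDeriv_inv (A := fun y => of (g y)) hg hdet, matrixDeriv_metric hsymm hdet,
      mul_add, add_mul,
      nonsing_inv_mul_cancel_left _ _ hdet.isUnit, ← mul_assoc,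
      mul_nonsing_inv_cancel_right _ _ hdet.isUnit]
  exact congrFun₂ hderiv a b

theorem differentiableAt_minv (hg : ∀ a b, DifferentiableAt ℝ (fun y => g y a b) q)
    (hdet : (Matrix.of (g q)).det ≠ 0) (a b : Fin m) :
    DifferentiableAt ℝ (fun y => minv (g y) a b) q :=
  differentiableAt_matrix_inv_apply hg hdet a b

open Matrix in
theorem pd_det (hsymm : ∀ y a b, g y a b = g y b a)
    (hg : ∀ a b, DifferentiableAt ℝ (fun y => g y a b) q) (hdet : (of (g q)).det ≠ 0)
    (c : Fin m) :
    pd c (fun y => (of (g y)).det) q = 2 * (of (g q)).det * ∑ a, christoffel g a c a q := by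
  calc pd c (fun y => (of (g y)).det) q
      = ((of (g q)).adjugate * (of (g q) * connectionMatrix g c q
          + (connectionMatrix g c q)ᵀ * of (g q))).trace := by
        rw [← matrixDeriv_metric hsymm hdet]
        exact fderiv_matrix_det_apply (A := fun y => of (g y)) hg _
    _ = 2 * (of (g q)).det * (connectionMatrix g c q).trace := by
        rw [mul_add, trace_add, trace_mul_comm _ (_ᵀ * _), ← mul_assoc, mul_assoc _ᵀ, adjugate_mul,
          mul_adjugate]
        simp only [Algebra.smul_mul_assoc, one_mul, trace_smul, smul_eq_mul,
          Algebra.mul_smul_comm, mul_one, trace_transpose]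
        ring

theorem hasDerivAt_sqrt_abs {d : ℝ} (hd : d ≠ 0) :
    HasDerivAt (fun d => √|d|) (√|d| / (2 * d)) d := by
  convert! (hasDerivAt_abs hd).sqrt (abs_ne_zero.mpr hd) using 1
  rw [div_eq_div_iff (by positivity) (by positivity), mul_left_comm,
    Real.mul_self_sqrt (abs_nonneg d), mul_left_comm, sign_mul_self]

section SqrtDet

variable (hsymm : ∀ y a b, g y a b = g y b a)
  (hg : ∀ a b, DifferentiableAt ℝ (fun y => g y a b) q) (hdet : (Matrix.of (g q)).det ≠ 0)

include hg hdet in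
theorem hasFDerivAt_sqrtDet :
    HasFDerivAt (sqrtDet g)
      ((sqrtDet g q / (2 * (Matrix.of (g q)).det))
        • fderiv ℝ (fun y => (Matrix.of (g y)).det) q) q :=
  (hasDerivAt_sqrt_abs hdet).comp_hasFDerivAt (f := fun y => (Matrix.of (g y)).det) q
    (differentiableAt_matrix_det hg).hasFDerivAt

include hsymm hg hdet

theorem pd_sqrtDet (c : Fin m) :
    pd c (sqrtDet g) q = sqrtDet g q * ∑ a, christoffel g a c a q := by
  calc pd c (sqrtDet g) q
      = sqrtDet g q / (2 * (Matrix.of (g q)).det) * pd c (fun y => (Matrix.of (g y)).det) q := by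
        simp [pd, (hasFDerivAt_sqrtDet hg hdet).fderiv]
    _ = sqrtDet g q * ∑ a, christoffel g a c a q := by
        rw [pd_det hsymm hg hdet]
        field_simp

theorem sum_pd_sqrtDet_mul_minv (b : Fin m) :
    ∑ a, pd a (fun y => sqrtDet g y * minv (g y) a b) q
      = -(sqrtDet g q * ∑ a, ∑ c, minv (g q) a c * christoffel g b a c q) := by
  have hpd (a : Fin m) : pd a (fun y => sqrtDet g y * minv (g y) a b) q
      = sqrtDet g q * ((∑ c, christoffel g c a c q) * minv (g q) a b
        - ∑ c, christoffel g a a c q * minv (g q) c b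
        - ∑ c, minv (g q) a c * christoffel g b a c q) := by
    rw [pd_mul (hasFDerivAt_sqrtDet hg hdet).differentiableAt (differentiableAt_minv hg hdet a b),
      pd_sqrtDet hsymm hg hdet, pd_minv hsymm hg hdet]
    ring
  have htrace : ∑ a, (∑ c, christoffel g c a c q) * minv (g q) a b
      = ∑ a, ∑ c, christoffel g a a c q * minv (g q) c b := by
    simp only [Finset.sum_mul]
    rw [Finset.sum_comm]
    simp only [christoffel_comm hsymm]
  simp only [hpd, ← Finset.mul_sum, Finset.sum_sub_distrib, htrace, sub_self, zero_sub, mul_neg]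

theorem sum_pd_sqrtDet_mul_raise {W : (Fin m → ℝ) → Fin m → ℝ}
    (hW : ∀ b, DifferentiableAt ℝ (fun y => W y b) q) :
    ∑ a, pd a (fun y => (∑ b, minv (g y) a b * W y b) * sqrtDet g y) q
      = sqrtDet g q * ∑ a, ∑ b, minv (g q) a b
        * (pd a (fun y => W y b) q - ∑ c, christoffel g c a b q * W q c) := by
  have hs := (hasFDerivAt_sqrtDet hg hdet).differentiableAt
  have hM := differentiableAt_minv hg hdet
  have hpd (a : Fin m) : pd a (fun y => (∑ b, minv (g y) a b * W y b) * sqrtDet g y) q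
      = ∑ b, (pd a (fun y => sqrtDet g y * minv (g y) a b) q * W q b
        + sqrtDet g q * (minv (g q) a b * pd a (fun y => W y b) q)) := by
    have hswap : (fun y => (∑ b, minv (g y) a b * W y b) * sqrtDet g y)
        = fun y => ∑ b, sqrtDet g y * minv (g y) a b * W y b := by
      funext y
      rw [Finset.sum_mul]
      exact Finset.sum_congr rfl fun b _ => by ring
    rw [hswap, pd_sum fun b => (hs.fun_mul (hM a b)).fun_mul (hW b)]
    refine Finset.sum_congr rfl fun b _ => ?_
    rw [pd_mul (hs.fun_mul (hM a b)) (hW b), mul_assoc (sqrtDet g q)]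
  have hdensity : ∑ a, ∑ b, pd a (fun y => sqrtDet g y * minv (g y) a b) q * W q b
      = -(sqrtDet g q * ∑ a, ∑ b, minv (g q) a b * ∑ c, christoffel g c a b q * W q c) := by
    rw [Finset.sum_comm]
    simp only [← Finset.sum_mul, sum_pd_sqrtDet_mul_minv hsymm hg hdet]
    simp only [neg_mul, mul_assoc, Finset.sum_mul, Finset.mul_sum, Finset.sum_neg_distrib]
    rw [Finset.sum_comm]
    exact congrArg Neg.neg (Finset.sum_congr rfl fun a _ => Finset.sum_comm)
  simp only [hpd, Finset.sum_add_distrib, hdensity, mul_sub, Finset.sum_sub_distrib,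
    ← Finset.mul_sum]
  ring

end SqrtDet

end Metric

section JetInner

variable {ι κ : Type*} [Fintype ι] [Fintype κ]

/-- The pairing `⟨u, v⟩ = M^{αβ} G_{ij} u^i_α v^j_β` of first jets; for `M = h⁻¹` and `G = g` it is
the polarization of twice the kinetic energy. -/
def jetInner (M : κ → κ → ℝ) (G : ι → ι → ℝ) (u v : ι → κ → ℝ) : ℝ :=
  ∑ α, ∑ β, ∑ i, ∑ j, M α β * G i j * u i α * v j β

variable {M : κ → κ → ℝ} {G : ι → ι → ℝ}

theorem jetInner_flip (hM : ∀ α β, M α β = M β α) (u v : ι → κ → ℝ) :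
    jetInner M (fun i j => G j i) u v = jetInner M G v u := by
  simp only [jetInner]
  rw [Finset.sum_comm]
  refine Finset.sum_congr rfl fun β _ => Finset.sum_congr rfl fun α _ => ?_
  rw [Finset.sum_comm]
  simp only [hM α β, mul_right_comm]

theorem jetInner_comm (hM : ∀ α β, M α β = M β α) (hG : ∀ i j, G i j = G j i)
    (u v : ι → κ → ℝ) : jetInner M G u v = jetInner M G v u := by
  rw [← jetInner_flip hM, show (fun i j => G j i) = G from funext₂ fun i j => hG j i]

theorem jetInner_add_left (M : κ → κ → ℝ) (G : ι → ι → ℝ) (u u' v : ι → κ → ℝ) :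
    jetInner M G (fun i α => u i α + u' i α) v = jetInner M G u v + jetInner M G u' v := by
  simp only [jetInner, mul_add, add_mul, Finset.sum_add_distrib]

theorem jetInner_add_form (M : κ → κ → ℝ) (G G' : ι → ι → ℝ) (u v : ι → κ → ℝ) :
    jetInner M (fun i j => G i j + G' i j) u v = jetInner M G u v + jetInner M G' u v := by
  simp only [jetInner, mul_add, add_mul, Finset.sum_add_distrib]

theorem jetInner_mul_form (M : κ → κ → ℝ) (G C : ι → ι → ℝ) (u v : ι → κ → ℝ) :
    jetInner M (fun i j => ∑ l, G i l * C l j) u v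
      = jetInner M G u fun l β => ∑ j, C l j * v j β := by
  simp only [jetInner, Finset.mul_sum, Finset.sum_mul]
  refine Finset.sum_congr rfl fun α _ => Finset.sum_congr rfl fun β _ =>
    Finset.sum_congr rfl fun i _ => ?_
  rw [Finset.sum_comm]
  simp only [mul_assoc, mul_left_comm]

theorem jetInner_single_left [DecidableEq ι] [DecidableEq κ] (M : κ → κ → ℝ) (G : ι → ι → ℝ)
    (k : ι) (α : κ) (v : ι → κ → ℝ) :
    jetInner M G (Pi.single k (Pi.single α 1)) v = ∑ β, M α β * ∑ j, G k j * v j β := by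
  have hsingle (i : ι) (a : κ) :
      (Pi.single k (Pi.single α 1) : ι → κ → ℝ) i a
        = if i = k then (if a = α then 1 else 0) else 0 := by
    by_cases hi : i = k
    · subst hi
      simp [Pi.single_apply]
    · simp [hi]
  simp only [jetInner, hsingle]
  simp [mul_assoc, Finset.mul_sum]

variable {E : Type*} [NormedAddCommGroup E] [NormedSpace ℝ E] {y : E}

theorem fderiv_jetInner {G : E → ι → ι → ℝ} {u v : E → ι → κ → ℝ}
    (hG : ∀ i j, DifferentiableAt ℝ (fun z => G z i j) y)
    (hu : ∀ i α, DifferentiableAt ℝ (fun z => u z i α) y)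
    (hv : ∀ i α, DifferentiableAt ℝ (fun z => v z i α) y) (M : κ → κ → ℝ) (w : E) :
    fderiv ℝ (fun z => jetInner M (G z) (u z) (v z)) y w
      = jetInner M (fun i j => fderiv ℝ (fun z => G z i j) y w) (u y) (v y)
        + jetInner M (G y) (fun i α => fderiv ℝ (fun z => u z i α) y w) (v y)
        + jetInner M (G y) (u y) fun i α => fderiv ℝ (fun z => v z i α) y w := by
  simp (disch := fun_prop) only [jetInner, fderiv_fun_sum, fderiv_fun_mul, fderiv_fun_const,
    sum_apply, add_apply, smul_apply, smul_eq_mul, ← Finset.sum_add_distrib]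
  refine Finset.sum_congr rfl fun α _ => Finset.sum_congr rfl fun β _ =>
    Finset.sum_congr rfl fun i _ => Finset.sum_congr rfl fun j _ => ?_
  simp only [Pi.zero_apply, zero_apply]
  ring

theorem fderiv_half_jetInner_self {G : E → ι → ι → ℝ} {u : E → ι → κ → ℝ}
    (hM : ∀ α β, M α β = M β α) (hsymm : ∀ i j, G y i j = G y j i)
    (hG : ∀ i j, DifferentiableAt ℝ (fun z => G z i j) y)
    (hu : ∀ i α, DifferentiableAt ℝ (fun z => u z i α) y) (w : E) :
    fderiv ℝ (fun z => (1 / 2) * jetInner M (G z) (u z) (u z)) y w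
      = (1 / 2) * jetInner M (fun i j => fderiv ℝ (fun z => G z i j) y w) (u y) (u y)
        + jetInner M (G y) (fun i α => fderiv ℝ (fun z => u z i α) y w) (u y) := by
  have hdiff : DifferentiableAt ℝ (fun z => jetInner M (G z) (u z) (u z)) y := by
    simp only [jetInner]
    fun_prop
  rw [fderiv_const_mul hdiff, smul_apply, fderiv_jetInner hG hu hu, jetInner_comm hM hsymm (u y)]
  simp only [smul_eq_mul]
  ring

end JetInner

section Energy

variable {p n : ℕ} {M : Fin p → Fin p → ℝ} {h : (Fin p → ℝ) → Fin p → Fin p → ℝ}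
  {g : (Fin n → ℝ) → Fin n → Fin n → ℝ} {q : Fin n → ℝ}
  {x : (Fin p → ℝ) → Fin n → ℝ} {t : Fin p → ℝ}

theorem half_jetInner_pd_metric (hM : ∀ α β, M α β = M β α)
    (gsymm : ∀ y i j, g y i j = g y j i) (gdet : (Matrix.of (g q)).det ≠ 0) (k : Fin n)
    (v : Fin n → Fin p → ℝ) :
    (1 / 2) * jetInner M (fun i j => pd k (fun y => g y i j) q) v v
      = jetInner M (g q) (fun i α => ∑ l, christoffel g i k l q * v l α) v := by
  let lowered : Fin n → Fin n → ℝ := fun i j => ∑ l, g q i l * christoffel g l k j q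
  calc (1 / 2) * jetInner M (fun i j => pd k (fun y => g y i j) q) v v
      = (1 / 2) * jetInner M (fun i j => lowered i j + lowered j i) v v := by
        simp only [pd_metric gsymm gdet, lowered]
    _ = jetInner M lowered v v := by
        rw [jetInner_add_form, jetInner_flip hM]
        ring
    _ = jetInner M (g q) (fun i α => ∑ l, christoffel g i k l q * v l α) v := by
        rw [jetInner_mul_form, jetInner_comm hM (gsymm q)]

theorem pd_potE {X : Fin n → Fin p → (Fin p → ℝ) → (Fin n → ℝ) → ℝ}
    (hsymm : ∀ α β, h t α β = h t β α)
    (gsymm : ∀ y i j, g y i j = g y j i) (hg : ∀ i j, DifferentiableAt ℝ (fun y => g y i j) q)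
    (gdet : (Matrix.of (g q)).det ≠ 0)
    (hX : ∀ i α, DifferentiableAt ℝ (fun y => X i α t y) q) (k : Fin n) :
    pd k (potE h g X t) q
      = jetInner (minv (h t)) (g q) (fun i α => nablaX g X k i α t q) (fun i α => X i α t q) := by
  have hM := minv_comm hsymm
  calc pd k (potE h g X t) q
      = (1 / 2) * jetInner (minv (h t)) (fun i j => pd k (fun y => g y i j) q)
            (fun i α => X i α t q) (fun i α => X i α t q)
          + jetInner (minv (h t)) (g q) (fun i α => pd k (fun y => X i α t y) q)
            (fun i α => X i α t q) :=
        fderiv_half_jetInner_self hM (gsymm q) hg hX _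
    _ = jetInner (minv (h t)) (g q) (fun i α => nablaX g X k i α t q) (fun i α => X i α t q) := by
        rw [half_jetInner_pd_metric hM gsymm gdet, add_comm, ← jetInner_add_left]
        rfl

theorem fderiv_half_jetInner_self_single (hM : ∀ α β, M α β = M β α) {G : Fin n → Fin n → ℝ}
    (hG : ∀ i j, G i j = G j i) (v : Fin n → Fin p → ℝ) (k : Fin n) (α : Fin p) :
    fderiv ℝ (fun v => (1 / 2) * jetInner M G v v) v (Pi.single k (Pi.single α 1))
      = ∑ β, M α β * ∑ j, G k j * v j β := by
  have hproj (i : Fin n) (a : Fin p) (w : Fin n → Fin p → ℝ) :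
      fderiv ℝ (fun v : Fin n → Fin p → ℝ => v i a) v w = w i a := by
    rw [fderiv_apply (by fun_prop), fderiv_apply (by fun_prop)]
    simp
  refine (fderiv_half_jetInner_self (G := fun _ => G) (u := fun v => v) hM hG
    (by fun_prop) (by fun_prop) _).trans ?_
  simp only [hproj, jetInner_single_left]
  simp [jetInner]

theorem pd_comp {φ : (Fin n → ℝ) → ℝ} (hφ : DifferentiableAt ℝ φ (x t))
    (hx : DifferentiableAt ℝ x t) (α : Fin p) :
    pd α (fun s => φ (x s)) t = ∑ l, pd l φ (x t) * jet x t l α := by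
  have hjet : fderiv ℝ x t (Pi.single α 1) = fun l => jet x t l α := by
    funext l
    exact congrArg (· (Pi.single α 1)) (fderiv_apply hx l).symm
  calc pd α (fun s => φ (x s)) t
      = fderiv ℝ φ (x t) (fderiv ℝ x t (Pi.single α 1)) :=
        congrArg (· (Pi.single α 1)) (fderiv_comp t hφ hx)
    _ = ∑ l, pd l φ (x t) * jet x t l α := by
        rw [hjet, pi_eq_sum_univ' fun l => jet x t l α, map_sum]
        simp [pd, mul_comm]

theorem differentiable_jet (hx : ContDiff ℝ 2 x) (i : Fin n) (α : Fin p) :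
    Differentiable ℝ fun s => jet x s i α :=
  ((contDiff_pi.mp hx i).fderiv_right (m := 1) le_rfl).differentiable one_ne_zero |>.clm_apply
    (differentiable_const _)

theorem pd_metric_comp (gsymm : ∀ y i j, g y i j = g y j i)
    (hg : ∀ i j, DifferentiableAt ℝ (fun y => g y i j) (x t))
    (gdet : (Matrix.of (g (x t))).det ≠ 0) (hx : DifferentiableAt ℝ x t) (α : Fin p) (a b : Fin n) :
    pd α (fun s => g (x s) a b) t
      = ∑ i, g (x t) a i * ∑ l, christoffel g i l b (x t) * jet x t l α
        + ∑ i, g (x t) b i * ∑ l, christoffel g i l a (x t) * jet x t l α := by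
  simp only [pd_comp (hg a b) hx, pd_metric gsymm gdet, add_mul, Finset.sum_add_distrib,
    Finset.mul_sum, Finset.sum_mul, mul_assoc]
  exact congrArg₂ (· + ·) Finset.sum_comm Finset.sum_comm

theorem pd_lower_jet (hx : ContDiff ℝ 2 x) (gsymm : ∀ y i j, g y i j = g y j i)
    (hg : ∀ i j, DifferentiableAt ℝ (fun y => g y i j) (x t))
    (gdet : (Matrix.of (g (x t))).det ≠ 0) (k : Fin n) (α β : Fin p) :
    pd α (fun s => ∑ j, g (x s) k j * jet x s j β) t
        - ∑ γ, christoffel h γ α β t * ∑ j, g (x t) k j * jet x t j γ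
      = ∑ j, g (x t) k j * covHess h g x j α β t
        + ∑ i, ∑ j, g (x t) i j * (∑ l, christoffel g i k l (x t) * jet x t l α) * jet x t j β := by
  have hxt : DifferentiableAt ℝ x t := (hx.differentiable two_ne_zero) t
  have hjet (j : Fin n) : DifferentiableAt ℝ (fun s => jet x s j β) t := differentiable_jet hx j β t
  have hgx (j : Fin n) : DifferentiableAt ℝ (fun s => g (x s) k j) t := (hg k j).comp t hxt
  have hpd : pd α (fun s => ∑ j, g (x s) k j * jet x s j β) t
      = ∑ j, ((∑ i, g (x t) k i * ∑ l, christoffel g i l j (x t) * jet x t l α) * jet x t j β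
        + (∑ i, g (x t) j i * ∑ l, christoffel g i l k (x t) * jet x t l α) * jet x t j β
        + g (x t) k j * pd α (fun s => jet x s j β) t) := by
    simp only [pd_sum fun j => (hgx j).fun_mul (hjet j), pd_mul (hgx _) (hjet _),
      pd_metric_comp gsymm hg gdet hxt, add_mul]
  have hlower : ∑ j, (∑ i, g (x t) k i * ∑ l, christoffel g i l j (x t) * jet x t l α)
        * jet x t j β
      = ∑ i, g (x t) k i * ∑ l, ∑ j, christoffel g i l j (x t) * jet x t l α * jet x t j β := by
    simp only [Finset.mul_sum, Finset.sum_mul, mul_assoc]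
    exact Finset.sum_comm.trans (Finset.sum_congr rfl fun i _ => Finset.sum_comm)
  have hcross : ∑ j, (∑ i, g (x t) j i * ∑ l, christoffel g i l k (x t) * jet x t l α)
        * jet x t j β
      = ∑ i, ∑ j, g (x t) i j * (∑ l, christoffel g i k l (x t) * jet x t l α) * jet x t j β := by
    simp only [Finset.sum_mul]
    rw [Finset.sum_comm]
    simp only [christoffel_comm gsymm _ k, gsymm (x t)]
  have hconn : ∑ γ, christoffel h γ α β t * ∑ j, g (x t) k j * jet x t j γ
      = ∑ j, g (x t) k j * ∑ γ, christoffel h γ α β t * jet x t j γ := by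
    simp only [Finset.mul_sum, mul_left_comm]
    exact Finset.sum_comm
  simp only [hpd, hconn, covHess, Finset.sum_add_distrib, hlower, hcross, mul_add, mul_sub,
    Finset.sum_sub_distrib]
  ring

/-- The tension field `τ^i = h^{αβ} x^i_{αβ}` of the map `x`, the trace of its covariant second jet
with respect to `h`; it vanishes exactly when `x` is harmonic. -/
def tensionField (h : (Fin p → ℝ) → Fin p → Fin p → ℝ) (g : (Fin n → ℝ) → Fin n → Fin n → ℝ)
    (x : (Fin p → ℝ) → Fin n → ℝ) (i : Fin n) (t : Fin p → ℝ) : ℝ :=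
  ∑ α, ∑ β, minv (h t) α β * covHess h g x i α β t

theorem sum_pd_momentum (hsymm : ∀ s α β, h s α β = h s β α)
    (hh : ∀ α β, DifferentiableAt ℝ (fun s => h s α β) t) (hdet : (Matrix.of (h t)).det ≠ 0)
    (gsymm : ∀ y i j, g y i j = g y j i)
    (hg : ∀ i j, DifferentiableAt ℝ (fun y => g y i j) (x t))
    (gdet : (Matrix.of (g (x t))).det ≠ 0) (hx : ContDiff ℝ 2 x) (k : Fin n) :
    ∑ α, pd α (fun s => (∑ β, minv (h s) α β * ∑ j, g (x s) k j * jet x s j β) * sqrtDet h s) t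
      = sqrtDet h t * (∑ j, g (x t) k j * tensionField h g x j t
        + jetInner (minv (h t)) (g (x t)) (fun i α => ∑ l, christoffel g i k l (x t) * jet x t l α)
          (jet x t)) := by
  have hxt : DifferentiableAt ℝ x t := (hx.differentiable two_ne_zero) t
  have hW (β : Fin p) : DifferentiableAt ℝ (fun s => ∑ j, g (x s) k j * jet x s j β) t :=
    .fun_sum fun j _ => ((hg k j).comp t hxt).fun_mul (differentiable_jet hx j β t)
  rw [sum_pd_sqrtDet_mul_raise hsymm hh hdet hW]
  simp only [pd_lower_jet hx gsymm hg gdet, mul_add, Finset.sum_add_distrib]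
  congr 2
  · simp only [tensionField, Finset.mul_sum, mul_left_comm]
    exact Finset.sum_comm_cycle.symm.trans Finset.sum_comm_cycle.symm
  · simp only [jetInner, Finset.mul_sum, Finset.sum_mul, mul_assoc]

/-- The Lagrangian density `(½ h^{αβ} g_{ij} x^i_α x^j_β + φ) √|det h|` of a map moving in the
potential `φ`. -/
def energyLagrangian (h : (Fin p → ℝ) → Fin p → Fin p → ℝ) (g : (Fin n → ℝ) → Fin n → Fin n → ℝ)
    (φ : (Fin p → ℝ) → (Fin n → ℝ) → ℝ) (t : Fin p → ℝ) (q : Fin n → ℝ) (v : Fin n → Fin p → ℝ) :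
    ℝ :=
  ((1 / 2) * jetInner (minv (h t)) (g q) v v + φ t q) * sqrtDet h t

variable {φ : (Fin p → ℝ) → (Fin n → ℝ) → ℝ}

theorem pd_energyLagrangian (hsymm : ∀ α β, h t α β = h t β α)
    (gsymm : ∀ y i j, g y i j = g y j i)
    (hg : ∀ i j, DifferentiableAt ℝ (fun y => g y i j) q)
    (gdet : (Matrix.of (g q)).det ≠ 0) (hφ : DifferentiableAt ℝ (φ t) q)
    (k : Fin n) (v : Fin n → Fin p → ℝ) :
    pd k (fun q => energyLagrangian h g φ t q v) q
      = sqrtDet h t * (pd k (φ t) q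
        + jetInner (minv (h t)) (g q) (fun i α => ∑ l, christoffel g i k l q * v l α) v) := by
  have hkin : DifferentiableAt ℝ (fun q => (1 / 2) * jetInner (minv (h t)) (g q) v v) q := by
    simp only [jetInner]
    fun_prop
  have hpd : pd k (fun q => (1 / 2) * jetInner (minv (h t)) (g q) v v) q
      = (1 / 2) * jetInner (minv (h t)) (fun i j => pd k (fun y => g y i j) q) v v := by
    refine (fderiv_half_jetInner_self (u := fun _ => v) (minv_comm hsymm) (gsymm q) hg
      (by fun_prop) _).trans ?_
    simp [pd, jetInner]
  rw [← half_jetInner_pd_metric (minv_comm hsymm) gsymm gdet, ← hpd]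
  unfold pd energyLagrangian
  rw [fderiv_mul_const (hkin.fun_add hφ), fderiv_fun_add hkin hφ, add_comm]
  rfl

theorem fderiv_energyLagrangian_single (hsymm : ∀ α β, h t α β = h t β α)
    (gsymm : ∀ i j, g q i j = g q j i) (v : Fin n → Fin p → ℝ) (k : Fin n) (α : Fin p) :
    fderiv ℝ (energyLagrangian h g φ t q) v (Pi.single k (Pi.single α 1))
      = (∑ β, minv (h t) α β * ∑ j, g q k j * v j β) * sqrtDet h t := by
  have hkin : DifferentiableAt ℝ (fun v => (1 / 2) * jetInner (minv (h t)) (g q) v v) v := by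
    simp only [jetInner]
    fun_prop
  rw [← fderiv_half_jetInner_self_single (minv_comm hsymm) gsymm, mul_comm]
  unfold energyLagrangian
  rw [fderiv_mul_const (hkin.add_const _), fderiv_add_const]
  rfl

variable (hsymm : ∀ t α β, h t α β = h t β α)
  (hh : ∀ α β, Differentiable ℝ fun t => h t α β) (hdet : ∀ t, (Matrix.of (h t)).det ≠ 0)
  (gsymm : ∀ q i j, g q i j = g q j i) (hg : ∀ i j, Differentiable ℝ fun q => g q i j)
  (gdet : ∀ q, (Matrix.of (g q)).det ≠ 0) (hx : ContDiff ℝ 2 x)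

include hsymm hh hdet gsymm hg gdet hx

theorem isExtremal_energyLagrangian_iff_lowered (hφ : ∀ t, Differentiable ℝ (φ t)) :
    IsExtremal (energyLagrangian h g φ) x
      ↔ ∀ t k, ∑ j, g (x t) k j * tensionField h g x j t = pd k (φ t) (x t) := by
  refine forall₂_congr fun t k => ?_
  have hρ : sqrtDet h t ≠ 0 := (Real.sqrt_pos.mpr (abs_pos.mpr (hdet t))).ne'
  simp only [fderiv_energyLagrangian_single (hsymm _) (gsymm _)]
  rw [sum_pd_momentum hsymm (hh · · t) (hdet t) gsymm (hg · · (x t)) (gdet (x t)) hx]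
  change pd k (fun q => energyLagrangian h g φ t q (jet x t)) (x t) - _ = 0 ↔ _
  rw [pd_energyLagrangian (hsymm t) gsymm (hg · · (x t)) (gdet (x t)) (hφ t (x t)), ← mul_sub,
    add_sub_add_right_eq_sub, mul_eq_zero_iff_left hρ, sub_eq_zero, eq_comm]

theorem isExtremal_energyLagrangian_iff (hφ : ∀ t, Differentiable ℝ (φ t)) :
    IsExtremal (energyLagrangian h g φ) x
      ↔ ∀ t i, tensionField h g x i t = ∑ k, minv (g (x t)) i k * pd k (φ t) (x t) := by
  rw [isExtremal_energyLagrangian_iff_lowered hsymm hh hdet gsymm hg gdet hx hφ]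
  refine forall_congr' fun t => ?_
  have hunit := (gdet (x t)).isUnit
  let G := Matrix.of (g (x t))
  let τ : Fin n → ℝ := fun j => tensionField h g x j t
  let dφ : Fin n → ℝ := fun k => pd k (φ t) (x t)
  calc (∀ k, ∑ j, g (x t) k j * τ j = dφ k)
      ↔ G.mulVec τ = dφ := funext_iff.symm
    _ ↔ τ = G⁻¹.mulVec dφ := by
        constructor <;> intro heq
        · rw [← heq, Matrix.mulVec_mulVec, Matrix.nonsing_inv_mul _ hunit, Matrix.one_mulVec]
        · rw [heq, Matrix.mulVec_mulVec, Matrix.mul_nonsing_inv _ hunit, Matrix.one_mulVec]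
    _ ↔ ∀ i, τ i = ∑ k, minv (g (x t)) i k * dφ k := funext_iff

theorem extremal_iff_poisson_system_of_Dt_zero_general
    {X : Fin n → Fin p → (Fin p → ℝ) → (Fin n → ℝ) → ℝ}
    (hX : ∀ i α t, Differentiable ℝ (X i α t)) :
    IsExtremal
      (fun t q v =>
        ((1 / 2) * (∑ α, ∑ β, ∑ i, ∑ j, minv (h t) α β * g q i j * v i α * v j β)
          + potE h g X t q) * sqrtDet h t) x
      ↔ ∀ (t : Fin p → ℝ) (i : Fin n),
          ∑ α, ∑ β, minv (h t) α β * covHess h g x i α β t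
            = ∑ h', ∑ α, ∑ β, ∑ k, ∑ j, minv (g (x t)) i h' * minv (h t) α β
                * g (x t) k j * nablaX g X h' k α t (x t) * X j β t (x t) := by
  have hpotE (t : Fin p → ℝ) : Differentiable ℝ (potE h g X t) := by
    unfold potE
    fun_prop
  have hpd (t : Fin p → ℝ) (k : Fin n) := pd_potE (hsymm t) gsymm (hg · · (x t)) (gdet (x t))
    (fun i α => hX i α t (x t)) k
  refine (isExtremal_energyLagrangian_iff hsymm hh hdet gsymm hg gdet hx hpotE).trans ?_
  simp only [hpd, tensionField, jetInner, Finset.mul_sum, mul_assoc]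

end Energy

/-- when `D_β X^i_α ≡ 0`, extremals of
`L = (½ h^{αβ} g_{ij} x^i_α x^j_β + f)√|det h|` are exactly the solutions of the
generalized Poisson system (12). -/
theorem extremal_iff_poisson_system_of_Dt_zero
    {p n : ℕ} (hp : 0 < p) (hn : 0 < n)
    (h : (Fin p → ℝ) → Fin p → Fin p → ℝ)
    (hsymm : ∀ t α β, h t α β = h t β α)
    (hsmooth : ∀ α β, ContDiff ℝ (⊤ : ℕ∞) fun t => h t α β)
    (hdet : ∀ t, (Matrix.of (h t)).det ≠ 0)
    (g : (Fin n → ℝ) → Fin n → Fin n → ℝ)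
    (gsymm : ∀ q i j, g q i j = g q j i)
    (gsmooth : ∀ i j, ContDiff ℝ (⊤ : ℕ∞) fun q => g q i j)
    (gdet : ∀ q, (Matrix.of (g q)).det ≠ 0)
    (X : Fin n → Fin p → (Fin p → ℝ) → (Fin n → ℝ) → ℝ)
    (Xsmooth : ∀ i α, ContDiff ℝ (⊤ : ℕ∞) fun z : (Fin p → ℝ) × (Fin n → ℝ) => X i α z.1 z.2)
    (hD : ∀ (i : Fin n) (α β : Fin p) (t : Fin p → ℝ) (q : Fin n → ℝ),
      Dt h X β i α t q = 0)
    (x : (Fin p → ℝ) → Fin n → ℝ) (hx : ContDiff ℝ (⊤ : ℕ∞) x) :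
    IsExtremal
      (fun t q v =>
        ((1 / 2) * (∑ α, ∑ β, ∑ i, ∑ j, minv (h t) α β * g q i j * v i α * v j β)
          + potE h g X t q) * sqrtDet h t) x
      ↔ ∀ (t : Fin p → ℝ) (i : Fin n),
          ∑ α, ∑ β, minv (h t) α β * covHess h g x i α β t
            = (∑ h', ∑ α, ∑ β, ∑ k, ∑ j, minv (g (x t)) i h' * minv (h t) α β
                * g (x t) k j * nablaX g X h' k α t (x t) * X j β t (x t))
              + (∑ α, ∑ β, minv (h t) α β * Dt h X β i α t (x t)) := by
  have hX (i : Fin n) (α : Fin p) (t : Fin p → ℝ) : Differentiable ℝ (X i α t) :=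
    ((Xsmooth i α).differentiable (by simp)).comp
      ((differentiable_const t).prodMk differentiable_id)
  simpa only [hD, mul_zero, Finset.sum_const_zero, add_zero] using
    extremal_iff_poisson_system_of_Dt_zero_general hsymm
      (fun α β => (hsmooth α β).differentiable (by simp)) hdet gsymm
      (fun i j => (gsmooth i j).differentiable (by simp)) gdet
      (hx.of_le (WithTop.coe_le_coe.mpr le_top)) hX
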